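/- arXiv:math/0601377 — 6 statements merged into one kernel-verified Lean document; each statement's English description precedes it below -/
import Mathlib

section
/- Let A be a Noetherian integral domain such that (𝔞 ∩ 𝔟)(𝔞 + 𝔟) = 𝔞𝔟 for every pair of ideals 𝔞, 𝔟 of A. Then A is a Dedekind domain. -/
/-!
An ideal dividing an invertible ideal is invertible, so the identity
`(a ⊓ b) * (a + b) = a * b` makes the sum of two invertible ideals invertible. Nonzero principal
ideals of a domain are invertible, hence so are all nonzero finitely generated ideals; in a
Noetherian domain these are all the nonzero ideals.
-/

open scoped nonZeroDivisors

section Invertible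

variable {A : Type*} [CommRing A]

theorem isUnit_coeIdeal_sup {S : Submonoid A} {P : Type*} [CommRing P] [Algebra A P]
    {a b : Ideal A} (h : (a ⊓ b) * (a + b) = a * b)
    (ha : IsUnit (a : FractionalIdeal S P)) (hb : IsUnit (b : FractionalIdeal S P)) :
    IsUnit ((a ⊔ b : Ideal A) : FractionalIdeal S P) := by
  refine isUnit_of_mul_isUnit_right (x := ((a ⊓ b : Ideal A) : FractionalIdeal S P)) ?_
  rw [← FractionalIdeal.coeIdeal_mul, ← Submodule.add_eq_sup, h, FractionalIdeal.coeIdeal_mul]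
  exact ha.mul hb

variable [IsDomain A]

theorem isUnit_coeIdeal_of_fg {K : Type*} [Field K] [Algebra A K] [IsFractionRing A K]
    (h : ∀ a b : Ideal A, a.FG → b.FG → (a ⊓ b) * (a + b) = a * b)
    {I : Ideal A} (hI : I.FG) (hI0 : I ≠ ⊥) : IsUnit (I : FractionalIdeal A⁰ K) := by
  induction I, hI using Submodule.fg_induction with
  | singleton x =>
    have hx : x ≠ 0 := mt Ideal.span_singleton_eq_bot.mpr hI0
    exact .of_mul_eq_one _ (FractionalIdeal.coe_ideal_span_singleton_mul_inv K hx)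
  | sup a b ha hb iha ihb =>
    rcases eq_or_ne a ⊥ with rfl | ha0
    · rw [bot_sup_eq] at hI0 ⊢
      exact ihb hI0
    rcases eq_or_ne b ⊥ with rfl | hb0
    · rw [sup_bot_eq]
      exact iha ha0
    exact isUnit_coeIdeal_sup (h a b ha hb) (iha ha0) (ihb hb0)

theorem isDedekindDomain_of_isUnit_coeIdeal
    (h : ∀ I : Ideal A, I ≠ ⊥ → IsUnit (I : FractionalIdeal A⁰ (FractionRing A))) :
    IsDedekindDomain A := by
  rw [isDedekindDomain_iff_mul_inv_cancel (K := FractionRing A)]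
  intro I hI
  have hnum : I.num ≠ ⊥ := mt FractionalIdeal.num_eq_zero_iff.mp hI
  rw [FractionalIdeal.mul_inv_cancel_iff_isUnit]
  exact FractionalIdeal.isUnit_num.mp (h I.num hnum)

end Invertible

theorem statement6 {A : Type*} [CommRing A] [IsDomain A] [IsNoetherianRing A]
    (h : ∀ a b : Ideal A, (a ⊓ b) * (a + b) = a * b) :
    IsDedekindDomain A := by
  refine isDedekindDomain_of_isUnit_coeIdeal fun I hI => ?_
  exact isUnit_coeIdeal_of_fg (fun a b _ _ => h a b) I.fg_of_isNoetherianRing hI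
end

section
/- Let A be a Noetherian unique factorization domain. Then A is a principal ideal domain if and only if (𝔞 ∩ 𝔟)(𝔞 + 𝔟) = 𝔞𝔟 holds for every pair of ideals 𝔞, 𝔟 of A. -/
/-!
In a Bézout ring, write `x = d * x'` and `y = d * y'` with `d` a generator of `(x, y)`. Then
`x * y = (d * x' * y') * d`, where `d * x' * y'` is a common multiple of `x` and `y`; this gives
`𝔞𝔟 ≤ (𝔞 ∩ 𝔟)(𝔞 + 𝔟)`, and the reverse inclusion always holds.

Conversely, in a GCD domain `(x) ∩ (y) = (lcm x y)` and `(x)(y) = (lcm x y)(gcd x y)`, so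
cancelling `lcm x y` from the identity for `(x)` and `(y)` leaves `(x, y) = (gcd x y)`. Hence the
ring is Bézout, and a Bézout domain with the ascending chain condition on principal ideals is a
principal ideal domain.
-/

open Ideal

theorem inf_mul_add_le_mul {R : Type*} [CommSemiring R] (a b : Ideal R) :
    (a ⊓ b) * (a + b) ≤ a * b := by
  rw [mul_add, Ideal.add_eq_sup, sup_le_iff]
  exact ⟨(mul_mono_left inf_le_right).trans (mul_comm b a).le, mul_mono_left inf_le_left⟩

theorem inf_mul_add_eq_mul_of_isBezout {R : Type*} [CommRing R] [IsBezout R] (a b : Ideal R) :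
    (a ⊓ b) * (a + b) = a * b := by
  refine (inf_mul_add_le_mul a b).antisymm (mul_le.mpr fun x hx y hy => ?_)
  obtain ⟨x', hx'⟩ := IsBezout.gcd_dvd_left x y
  obtain ⟨y', hy'⟩ := IsBezout.gcd_dvd_right x y
  obtain ⟨u, v, huv⟩ := IsBezout.gcd_eq_sum x y
  set d := IsBezout.gcd x y
  have hd : d ∈ a + b :=
    huv ▸ Submodule.add_mem_sup (a.mul_mem_left u hx) (b.mul_mem_left v hy)
  have hlcm : d * x' * y' ∈ a ⊓ b := by
    refine ⟨a.mul_mem_right y' (hx' ▸ hx), ?_⟩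
    rw [mul_right_comm]
    exact b.mul_mem_right x' (hy' ▸ hy)
  have hxy : x * y = d * x' * y' * d := by
    rw [hx', hy']
    ring
  exact hxy ▸ mul_mem_mul hlcm hd

theorem span_singleton_inf_span_singleton_eq_span_lcm {R : Type*} [CommSemiring R] [GCDMonoid R]
    (x y : R) : span {x} ⊓ span {y} = span {lcm x y} := by
  ext z
  simp only [mem_inf, mem_span_singleton, lcm_dvd_iff]

theorem span_pair_eq_span_gcd_of_inf_mul_add_eq_mul {R : Type*} [CommRing R] [GCDMonoid R]
    {x y : R} (hx : x ≠ 0) (hy : y ≠ 0)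
    (h : (span {x} ⊓ span {y}) * (span {x} + span {y}) = span {x} * span {y}) :
    span {x, y} = span {gcd x y} := by
  have : IsDomain R := { exists_pair_ne := ⟨x, 0, hx⟩ }
  have hlcm : lcm x y ≠ 0 := by simp [lcm_eq_zero_iff, hx, hy]
  rw [← span_singleton_mul_right_inj hlcm]
  calc span {lcm x y} * span {x, y} = span {x} * span {y} := by
        rw [span_insert, ← Ideal.add_eq_sup, ← span_singleton_inf_span_singleton_eq_span_lcm, h]
    _ = span {gcd x y * lcm x y} := by
        rw [span_singleton_mul_span_singleton,
          span_singleton_eq_span_singleton.mpr (gcd_mul_lcm x y)]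
    _ = span {lcm x y} * span {gcd x y} := by
        rw [mul_comm, span_singleton_mul_span_singleton]

theorem isBezout_iff_inf_mul_add_eq_mul {R : Type*} [CommRing R] [hR : IsGCDMonoid R] :
    IsBezout R ↔ ∀ a b : Ideal R, (a ⊓ b) * (a + b) = a * b := by
  refine ⟨fun _ => inf_mul_add_eq_mul_of_isBezout, fun h => ?_⟩
  obtain ⟨_⟩ := hR
  refine IsBezout.iff_span_pair_isPrincipal.mpr fun x y => ?_
  rcases eq_or_ne x 0 with rfl | hx
  · exact ⟨y, span_insert_zero⟩
  rcases eq_or_ne y 0 with rfl | hy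
  · exact ⟨x, span_pair_zero x⟩
  · exact ⟨gcd x y, span_pair_eq_span_gcd_of_inf_mul_add_eq_mul hx hy (h _ _)⟩

theorem isPrincipalIdealRing_iff_isBezout {R : Type*} [CommRing R] [IsDomain R]
    [WfDvdMonoid R] : IsPrincipalIdealRing R ↔ IsBezout R :=
  ⟨fun _ => inferInstance, fun _ => (IsBezout.TFAE.out 1 3).mpr ‹_›⟩

theorem statement9_general {A : Type*} [CommRing A] [IsDomain A] [UniqueFactorizationMonoid A] :
    IsPrincipalIdealRing A ↔ ∀ a b : Ideal A, (a ⊓ b) * (a + b) = a * b :=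
  isPrincipalIdealRing_iff_isBezout.trans isBezout_iff_inf_mul_add_eq_mul

theorem statement9 {A : Type*} [CommRing A] [IsDomain A] [IsNoetherianRing A]
    [UniqueFactorizationMonoid A] :
    IsPrincipalIdealRing A ↔ ∀ a b : Ideal A, (a ⊓ b) * (a + b) = a * b :=
  statement9_general
end

section
/- Let A be a commutative ring and 𝔞, 𝔟, 𝔠 ideals of A. Then (𝔞 ∩ 𝔟 ∩ 𝔠) · (𝔞 + 𝔟)(𝔞 + 𝔠)(𝔟 + 𝔠) ⊆ 𝔞𝔟𝔠 · (𝔞 + 𝔟 + 𝔠). -/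
/-!
Addition of ideals is idempotent, so the term `2abc` in the expansion of `(a + b)(a + c)(b + c)`
may be replaced by `3abc`, and the product factors as `(ab + ac + bc)(a + b + c)`. Multiplying by
`d = a ∩ b ∩ c` sends each of `ab`, `ac`, `bc` into `abc`, since `d` lies in the missing factor.
-/

section IdemCommSemiring

variable {R : Type*} [IdemCommSemiring R]

theorem add_mul_add_mul_add_eq_mul_add_add (a b c : R) :
    (a + b) * (a + c) * (b + c) = (a * b + a * c + b * c) * (a + b + c) :=
  calc (a + b) * (a + c) * (b + c)
      = a * b * (a + b) + a * c * (a + c) + b * c * (b + c) + (a * b * c + a * b * c) := by ring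
    _ = a * b * (a + b) + a * c * (a + c) + b * c * (b + c) +
          (a * b * c + a * b * c + a * b * c) := by simp only [add_idem]
    _ = (a * b + a * c + b * c) * (a + b + c) := by ring

theorem mul_add_mul_add_mul_le_mul_mul {a b c d : R} (hda : d ≤ a) (hdb : d ≤ b) (hdc : d ≤ c) :
    d * (a * b + a * c + b * c) ≤ a * b * c :=
  calc d * (a * b + a * c + b * c)
      = d * (a * b) + d * (a * c) + d * (b * c) := by simp only [mul_add]
    _ ≤ c * (a * b) + b * (a * c) + a * (b * c) := by gcongr
    _ = a * b * c := by
      rw [mul_comm c, mul_left_comm b, ← mul_assoc a, add_idem, add_idem]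

theorem statement12_general {a b c d : R} (hda : d ≤ a) (hdb : d ≤ b) (hdc : d ≤ c) :
    d * ((a + b) * (a + c) * (b + c)) ≤ a * b * c * (a + b + c) := by
  rw [add_mul_add_mul_add_eq_mul_add_add, ← mul_assoc]
  gcongr ?_ * _
  exact mul_add_mul_add_mul_le_mul_mul hda hdb hdc

end IdemCommSemiring

theorem statement12 {A : Type*} [CommRing A] (a b c : Ideal A) :
    (a ⊓ b ⊓ c) * ((a + b) * (a + c) * (b + c)) ≤ a * b * c * (a + b + c) :=
  statement12_general (inf_le_left.trans inf_le_left) (inf_le_left.trans inf_le_right) inf_le_right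
end

section
/- Let A be a commutative ring and 𝔞, 𝔟, 𝔠, 𝔡 ideals of A. Then (𝔞 ∩ 𝔟 ∩ 𝔠 ∩ 𝔡) · (𝔞+𝔟)(𝔞+𝔠)(𝔞+𝔡)(𝔟+𝔠)(𝔟+𝔡)(𝔠+𝔡) · (𝔞+𝔟+𝔠+𝔡) ⊆ 𝔞𝔟𝔠𝔡 · (𝔞+𝔟+𝔠)(𝔞+𝔟+𝔡)(𝔞+𝔠+𝔡)(𝔟+𝔠+𝔡). -/
/-!
In a commutative idempotent semiring, such as that of ideals, where `x + y` is the join,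
`(x + y) (x + z) (y + z) = (x + y + z) (x y + x z + y z)`. For `x, y, z = a, b, c` this rewrites
the product of the pair sums without `d`, reducing the claim to one inequality for each of the
products `a b`, `a c`, `b c`. In the one for `a b`, a lower bound `t` of `c` and `d` absorbs
`c + d` through `t (c + d) ≤ c d`, and the remaining factor `(a + d) (b + d) (a + b + c + d)` is
bounded by the same identity for `x, y, z = a + d, b + d, c`.
-/

section IdemCommSemiring

variable {R : Type*} [IdemCommSemiring R]

theorem add_mul_add_mul_add_eq (x y z : R) :
    (x + y) * (x + z) * (y + z) = (x + y + z) * (x * y + x * z + y * z) := by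
  have mul_mul_le : x * z * y ≤ (x + y) * (x + z) * (y + z) :=
    mul_le_mul' (mul_le_mul' le_self_add le_add_self) le_self_add
  calc (x + y) * (x + z) * (y + z)
      = (x + y) * (x + z) * (y + z) + x * z * y := (add_eq_left_iff_le.mpr mul_mul_le).symm
    _ = (x + y + z) * (x * y + x * z + y * z) := by ring

theorem mul_mul_add_add_le_add_mul_add_mul_add (x y z : R) :
    x * y * (x + y + z) ≤ (x + y) * (x + z) * (y + z) := by
  rw [add_mul_add_mul_add_eq, mul_comm, add_assoc (x * y)]
  exact mul_le_mul' le_rfl le_self_add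

theorem add_mul_add_mul_add_add_add_le (a b c d : R) :
    (a + d) * (b + d) * (a + b + c + d) ≤ (a + b + d) * (a + c + d) * (b + c + d) := by
  have sum_eq : a + d + (b + d) = a + b + d := by
    rw [add_add_add_comm, add_idem]
  have key := mul_mul_add_add_le_add_mul_add_mul_add (a + d) (b + d) c
  rwa [sum_eq, add_right_comm _ d c, add_right_comm a d c, add_right_comm b d c] at key

theorem mul_add_le_mul_of_le {t c d : R} (hc : t ≤ c) (hd : t ≤ d) : t * (c + d) ≤ c * d := by
  rw [mul_add, mul_comm t c]
  exact add_le (mul_le_mul' le_rfl hd) (mul_le_mul' hc le_rfl)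

theorem mul_mul_add_mul_add_add_add_le_of_le {t c d : R} (a b : R) (hc : t ≤ c) (hd : t ≤ d) :
    t * (a * b) * ((a + d) * (b + d) * (c + d) * (a + b + c + d)) ≤
      a * b * c * d * ((a + b + d) * (a + c + d) * (b + c + d)) :=
  calc t * (a * b) * ((a + d) * (b + d) * (c + d) * (a + b + c + d))
      = a * b * (t * (c + d)) * ((a + d) * (b + d) * (a + b + c + d)) := by ring
    _ ≤ a * b * (c * d) * ((a + b + d) * (a + c + d) * (b + c + d)) :=
        mul_le_mul' (mul_le_mul' le_rfl (mul_add_le_mul_of_le hc hd))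
          (add_mul_add_mul_add_add_add_le a b c d)
    _ = a * b * c * d * ((a + b + d) * (a + c + d) * (b + c + d)) := by ring

theorem statement13_general {t a b c d : R} (ha : t ≤ a) (hb : t ≤ b) (hc : t ≤ c) (hd : t ≤ d) :
    t * ((a + b) * (a + c) * (a + d) * (b + c) * (b + d) * (c + d)) * (a + b + c + d) ≤
      a * b * c * d * ((a + b + c) * (a + b + d) * (a + c + d) * (b + c + d)) := by
  let factor := (a + d) * (b + d) * (c + d) * (a + b + c + d)
  let bound := a * b * c * d * ((a + b + d) * (a + c + d) * (b + c + d))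
  have hab : t * (a * b) * factor ≤ bound := mul_mul_add_mul_add_add_add_le_of_le a b hc hd
  have hac : t * (a * c) * factor ≤ bound := by
    convert mul_mul_add_mul_add_add_add_le_of_le a c hb hd using 1 <;> ring
  have hbc : t * (b * c) * factor ≤ bound := by
    convert mul_mul_add_mul_add_add_add_le_of_le b c ha hd using 1 <;> ring
  calc t * ((a + b) * (a + c) * (a + d) * (b + c) * (b + d) * (c + d)) * (a + b + c + d)
      = (a + b) * (a + c) * (b + c) * (t * factor) := by ring
    _ = (a + b + c) * (t * (a * b) * factor + t * (a * c) * factor + t * (b * c) * factor) := by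
        rw [add_mul_add_mul_add_eq]; ring
    _ ≤ (a + b + c) * bound := mul_le_mul' le_rfl (add_le (add_le hab hac) hbc)
    _ = a * b * c * d * ((a + b + c) * (a + b + d) * (a + c + d) * (b + c + d)) := by ring

end IdemCommSemiring

theorem statement13 {A : Type*} [CommRing A] (a b c d : Ideal A) :
    (a ⊓ b ⊓ c ⊓ d) *
        ((a + b) * (a + c) * (a + d) * (b + c) * (b + d) * (c + d)) *
        (a + b + c + d)
      ≤ a * b * c * d *
        ((a + b + c) * (a + b + d) * (a + c + d) * (b + c + d)) :=
  statement13_general (inf_le_left.trans (inf_le_left.trans inf_le_left))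
    (inf_le_left.trans (inf_le_left.trans inf_le_right)) (inf_le_left.trans inf_le_right)
    inf_le_right
end

section
/- Let A be a commutative ring and 𝔞, 𝔟, 𝔠, 𝔡, 𝔢 ideals of A. Then (𝔞 ∩ 𝔟 ∩ 𝔠 ∩ 𝔡 ∩ 𝔢) · ∏(𝔞ᵢ+𝔞ⱼ) · ∏(𝔞ᵢ+𝔞ⱼ+𝔞ₖ+𝔞ₗ) ⊆ 𝔞𝔟𝔠𝔡𝔢 · ∏(𝔞ᵢ+𝔞ⱼ+𝔞ₖ) · (𝔞+𝔟+𝔠+𝔡+𝔢), where the products on the left run over all 2-element and all 4-element subsets of {𝔞, 𝔟, 𝔠, 𝔡, 𝔢} respectively, and the product of triple sums on the right runs over all 3-element subsets of {𝔞, 𝔟, 𝔠, 𝔡, 𝔢}. -/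
/-!
In the idempotent semiring of ideals, compare the product of the sums `∑ i ∈ T, a i` over the
nonempty `T` of even cardinality with the product over the `T` of odd cardinality at least three.
Adjoin a new index `k` and put `e = a k`. If `k ∈ T` and `T \ {k}` is nonempty, idempotence gives
`∑ i ∈ T, a i = ∑ i ∈ T \ {k}, (a i + e)`, so the new factors form a product of the opposite parity
for the translated family `a i + e`. By induction, the even product is the odd product times
`∑ i, ∏ j ≠ i, a j`; and an ideal contained in every `a i`, multiplied by this last factor, is
contained in `∏ i, a i`.
-/

section CommSemiring

variable {ι S : Type*} [CommSemiring S]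

/-- The product of the subset sums `∑ i ∈ T, a i` over the subsets `T` of `s` whose cardinality
satisfies `p`. -/
def prodSubsetSums (p : ℕ → Prop) [DecidablePred p] (s : Finset ι) (a : ι → S) : S :=
  ∏ T ∈ s.powerset with p T.card, ∑ i ∈ T, a i

theorem prodSubsetSums_odd_eq_prod_mul (s : Finset ι) (a : ι → S) :
    prodSubsetSums Odd s a = (∏ i ∈ s, a i) * prodSubsetSums (fun k ↦ Odd k ∧ k ≠ 1) s a := by
  have h_singletons : ∏ T ∈ s.powerset with T.card = 1, ∑ i ∈ T, a i = ∏ i ∈ s, a i := by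
    rw [← Finset.powersetCard_eq_filter, Finset.powersetCard_one, Finset.prod_map]
    simp
  rw [← h_singletons, prodSubsetSums, prodSubsetSums,
    ← Finset.prod_filter_mul_prod_filter_not _ (fun T ↦ T.card = 1), Finset.filter_filter,
    Finset.filter_filter]
  congr 2
  ext T
  grind

variable [DecidableEq ι]

/-- The elementary symmetric polynomial of degree `#s - 1` in the family `a` on `s`, which is `0`
when `s` is empty. -/
def sumProdErase (s : Finset ι) (a : ι → S) : S :=
  ∑ i ∈ s, ∏ j ∈ s.erase i, a j

theorem sumProdErase_insert {s : Finset ι} {i : ι} (hi : i ∉ s) (a : ι → S) :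
    sumProdErase (insert i s) a = ∏ j ∈ s, a j + a i * sumProdErase s a := by
  rw [sumProdErase, Finset.sum_insert hi, Finset.erase_insert hi, sumProdErase, Finset.mul_sum]
  congr 1
  refine Finset.sum_congr rfl fun k hk ↦ ?_
  have hik : i ≠ k := (ne_of_mem_of_not_mem hk hi).symm
  rw [Finset.erase_insert_of_ne hik, Finset.prod_insert (mt Finset.mem_of_mem_erase hi)]

end CommSemiring

section IdemCommSemiring

variable {ι S : Type*} [IdemCommSemiring S]

theorem sum_add_const_of_nonempty {T : Finset ι} (hT : T.Nonempty) (a : ι → S) (e : S) :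
    ∑ i ∈ T, (a i + e) = e + ∑ i ∈ T, a i := by
  rw [Finset.sum_add_distrib, Finset.sum_const, nsmul_eq_self hT.card_ne_zero, add_comm]

theorem sum_le_of_forall_le {s : Finset ι} {f : ι → S} {x : S} (h : ∀ i ∈ s, f i ≤ x) :
    ∑ i ∈ s, f i ≤ x :=
  Finset.sum_induction f (· ≤ x) (fun _ _ ↦ add_le) zero_le h

variable [DecidableEq ι]

theorem prodSubsetSums_insert (p : ℕ → Prop) [DecidablePred p] (hp : ¬p 1) {s : Finset ι} {i : ι}
    (hi : i ∉ s) (a : ι → S) :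
    prodSubsetSums p (insert i s) a =
      prodSubsetSums p s a * prodSubsetSums (fun k ↦ p (k + 1)) s (fun j ↦ a j + a i) := by
  simp only [prodSubsetSums, Finset.prod_filter, Finset.prod_powerset_insert hi]
  congr 1
  refine Finset.prod_congr rfl fun T hT ↦ ?_
  have hiT : i ∉ T := Finset.notMem_mono (Finset.mem_powerset.1 hT) hi
  rw [Finset.card_insert_of_notMem hiT, Finset.sum_insert hiT]
  obtain rfl | hne := T.eq_empty_or_nonempty
  · simp [hp]
  · rw [sum_add_const_of_nonempty hne]

theorem prod_add_const_le (s : Finset ι) (a : ι → S) (e : S) :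
    ∏ i ∈ s, (a i + e) ≤ ∏ i ∈ s, a i + e * sumProdErase s (fun i ↦ a i + e) := by
  induction s using Finset.induction_on with
  | empty => simp
  | insert i s hi ih =>
    rw [Finset.prod_insert hi, Finset.prod_insert hi, sumProdErase_insert hi]
    set P := ∏ j ∈ s, (a j + e)
    set D := sumProdErase s (fun j ↦ a j + e)
    calc
      (a i + e) * P = a i * P + e * P := add_mul ..
      _ ≤ a i * (∏ j ∈ s, a j + e * D) + e * P := by gcongr
      _ = a i * ∏ j ∈ s, a j + e * (P + a i * D) := by ring
      _ ≤ a i * ∏ j ∈ s, a j + e * (P + (a i + e) * D) := by gcongr; exact le_self_add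

theorem mul_sumProdErase_le_prod {s : Finset ι} {a : ι → S} {x : S} (hx : ∀ i ∈ s, x ≤ a i) :
    x * sumProdErase s a ≤ ∏ i ∈ s, a i := by
  rw [sumProdErase, Finset.mul_sum]
  refine sum_le_of_forall_le fun i hi ↦ ?_
  rw [← Finset.mul_prod_erase s a hi]
  gcongr
  exact hx i hi

theorem sumProdErase_add_const_mul_prod_le (s : Finset ι) (a : ι → S) (e : S) :
    sumProdErase s (fun i ↦ a i + e) * ∏ i ∈ s, a i ≤
      sumProdErase s a * ∏ i ∈ s, (a i + e) := by
  rw [sumProdErase, sumProdErase, Finset.sum_mul, Finset.sum_mul]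
  refine Finset.sum_le_sum fun i hi ↦ ?_
  calc
    (∏ j ∈ s.erase i, (a j + e)) * ∏ j ∈ s, a j
        = (∏ j ∈ s.erase i, a j) * (a i * ∏ j ∈ s.erase i, (a j + e)) := by
      rw [← Finset.mul_prod_erase s a hi]
      ring
    _ ≤ (∏ j ∈ s.erase i, a j) * ((a i + e) * ∏ j ∈ s.erase i, (a j + e)) := by
      gcongr
      exact le_self_add
    _ = (∏ j ∈ s.erase i, a j) * ∏ j ∈ s, (a j + e) := by
      rw [Finset.mul_prod_erase s (fun j ↦ a j + e) hi]

theorem sumProdErase_mul_prod_add_const (s : Finset ι) (a : ι → S) (e : S) :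
    sumProdErase s a * ∏ i ∈ s, (a i + e) =
      (∏ i ∈ s, a i + e * sumProdErase s a) * sumProdErase s (fun i ↦ a i + e) := by
  have h_expand := prod_add_const_le s a e
  have h_exchange := sumProdErase_add_const_mul_prod_le s a e
  have h_absorb : e * sumProdErase s (fun i ↦ a i + e) ≤ ∏ i ∈ s, (a i + e) :=
    mul_sumProdErase_le_prod fun _ _ ↦ le_add_self
  have h_mono : sumProdErase s a ≤ sumProdErase s (fun i ↦ a i + e) := by
    unfold sumProdErase
    gcongr
    exact le_self_add
  set P := ∏ i ∈ s, (a i + e)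
  set D := sumProdErase s (fun i ↦ a i + e)
  apply le_antisymm
  · calc
      sumProdErase s a * P ≤ sumProdErase s a * (∏ i ∈ s, a i + e * D) := by gcongr
      _ = sumProdErase s a * ∏ i ∈ s, a i + e * sumProdErase s a * D := by ring
      _ ≤ D * ∏ i ∈ s, a i + e * sumProdErase s a * D := by gcongr
      _ = (∏ i ∈ s, a i + e * sumProdErase s a) * D := by ring
  · calc
      (∏ i ∈ s, a i + e * sumProdErase s a) * D
          = D * ∏ i ∈ s, a i + sumProdErase s a * (e * D) := by ring
      _ ≤ sumProdErase s a * P := add_le h_exchange (by gcongr)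

theorem prodSubsetSums_even_insert {s : Finset ι} {i : ι} (hi : i ∉ s) (a : ι → S) :
    prodSubsetSums (fun k ↦ Even k ∧ k ≠ 0) (insert i s) a =
      prodSubsetSums (fun k ↦ Even k ∧ k ≠ 0) s a *
        prodSubsetSums Odd s (fun j ↦ a j + a i) := by
  rw [prodSubsetSums_insert _ (by simp) hi]
  simp only [Nat.even_add_one, Nat.not_even_iff_odd, ne_eq, Nat.succ_ne_zero, not_false_eq_true,
    and_true]

theorem prodSubsetSums_odd_ne_one_insert {s : Finset ι} {i : ι} (hi : i ∉ s) (a : ι → S) :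
    prodSubsetSums (fun k ↦ Odd k ∧ k ≠ 1) (insert i s) a =
      prodSubsetSums (fun k ↦ Odd k ∧ k ≠ 1) s a *
        prodSubsetSums (fun k ↦ Even k ∧ k ≠ 0) s (fun j ↦ a j + a i) := by
  rw [prodSubsetSums_insert _ (by simp) hi]
  simp only [Nat.odd_add_one, Nat.not_odd_iff_even, ne_eq, Nat.add_eq_right]

theorem prodSubsetSums_even_eq_sumProdErase_mul_odd {s : Finset ι} (hs : s.Nonempty)
    (a : ι → S) :
    prodSubsetSums (fun k ↦ Even k ∧ k ≠ 0) s a =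
      sumProdErase s a * prodSubsetSums (fun k ↦ Odd k ∧ k ≠ 1) s a := by
  induction hs using Finset.Nonempty.cons_induction generalizing a with
  | singleton i =>
    have h_powerset : ({i} : Finset ι).powerset = {∅, {i}} := by
      ext T
      simp [Finset.subset_singleton_iff]
    simp [prodSubsetSums, sumProdErase, Finset.prod_filter, h_powerset]
  | cons i s hi _ ih =>
    rw [Finset.cons_eq_insert, prodSubsetSums_even_insert hi, prodSubsetSums_odd_eq_prod_mul,
      prodSubsetSums_odd_ne_one_insert hi, ih, ih, sumProdErase_insert hi]
    set b := fun j ↦ a j + a i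
    set q := prodSubsetSums (S := S) (fun k ↦ Odd k ∧ k ≠ 1) s
    calc
      sumProdErase s a * q a * ((∏ j ∈ s, b j) * q b)
          = sumProdErase s a * (∏ j ∈ s, b j) * (q a * q b) := by ring
      _ = (∏ j ∈ s, a j + a i * sumProdErase s a) * sumProdErase s b * (q a * q b) := by
        rw [sumProdErase_mul_prod_add_const]
      _ = (∏ j ∈ s, a j + a i * sumProdErase s a) * (q a * (sumProdErase s b * q b)) := by ring

end IdemCommSemiring

theorem mul_prodSubsetSums_even_le_odd {ι S : Type*} [IdemCommSemiring S] {s : Finset ι}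
    (hs : s.Nonempty) {a : ι → S} {x : S} (hx : ∀ i ∈ s, x ≤ a i) :
    x * prodSubsetSums (fun k ↦ Even k ∧ k ≠ 0) s a ≤ prodSubsetSums Odd s a := by
  classical
  rw [prodSubsetSums_even_eq_sumProdErase_mul_odd hs, prodSubsetSums_odd_eq_prod_mul, ← mul_assoc]
  gcongr
  exact mul_sumProdErase_le_prod hx

section FinFive

theorem inf_univ_fin_five {L : Type*} [SemilatticeInf L] [OrderTop L] (a b c d e : L) :
    Finset.univ.inf ![a, b, c, d, e] = a ⊓ b ⊓ c ⊓ d ⊓ e := by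
  simp [Fin.univ_succ, inf_assoc]

variable {S : Type*} [CommSemiring S]

theorem prodSubsetSums_even_fin_five (a b c d e : S) :
    prodSubsetSums (fun k ↦ Even k ∧ k ≠ 0) Finset.univ ![a, b, c, d, e] =
      ((a + b) * (a + c) * (a + d) * (a + e) * (b + c) * (b + d) * (b + e) *
          (c + d) * (c + e) * (d + e)) *
        ((a + b + c + d) * (a + b + c + e) * (a + b + d + e) * (a + c + d + e) *
          (b + c + d + e)) := by
  have h_subsets :
      {T ∈ (Finset.univ : Finset (Fin 5)).powerset | Even T.card ∧ T.card ≠ 0} =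
        {{0, 1}, {0, 2}, {0, 3}, {0, 4}, {1, 2}, {1, 3}, {1, 4}, {2, 3}, {2, 4}, {3, 4},
          {0, 1, 2, 3}, {0, 1, 2, 4}, {0, 1, 3, 4}, {0, 2, 3, 4}, {1, 2, 3, 4}} := by
    decide
  rw [prodSubsetSums, h_subsets]
  simp +decide [Finset.prod_insert, Finset.sum_insert, mul_assoc, add_assoc]

theorem prodSubsetSums_odd_fin_five (a b c d e : S) :
    prodSubsetSums Odd Finset.univ ![a, b, c, d, e] =
      a * b * c * d * e *
        ((a + b + c) * (a + b + d) * (a + b + e) * (a + c + d) * (a + c + e) *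
          (a + d + e) * (b + c + d) * (b + c + e) * (b + d + e) * (c + d + e)) *
        (a + b + c + d + e) := by
  have h_subsets :
      {T ∈ (Finset.univ : Finset (Fin 5)).powerset | Odd T.card} =
        {{0}, {1}, {2}, {3}, {4}, {0, 1, 2}, {0, 1, 3}, {0, 1, 4}, {0, 2, 3}, {0, 2, 4},
          {0, 3, 4}, {1, 2, 3}, {1, 2, 4}, {1, 3, 4}, {2, 3, 4}, {0, 1, 2, 3, 4}} := by
    decide
  rw [prodSubsetSums, h_subsets]
  simp +decide [Finset.prod_insert, Finset.sum_insert, mul_assoc, add_assoc]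

end FinFive

theorem statement14_general {ι A : Type*} [CommSemiring A] (s : Finset ι) (a : ι → Ideal A) :
    s.inf a * prodSubsetSums (fun k ↦ Even k ∧ k ≠ 0) s a ≤ prodSubsetSums Odd s a := by
  obtain rfl | hs := s.eq_empty_or_nonempty
  · simp [prodSubsetSums, Finset.prod_filter]
  · exact mul_prodSubsetSums_even_le_odd hs fun _ ↦ Finset.inf_le

theorem statement14 {A : Type*} [CommRing A] (a b c d e : Ideal A) :
    (a ⊓ b ⊓ c ⊓ d ⊓ e) *
        ((a + b) * (a + c) * (a + d) * (a + e) * (b + c) * (b + d) * (b + e) *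
          (c + d) * (c + e) * (d + e)) *
        ((a + b + c + d) * (a + b + c + e) * (a + b + d + e) * (a + c + d + e) *
          (b + c + d + e))
      ≤ a * b * c * d * e *
        ((a + b + c) * (a + b + d) * (a + b + e) * (a + c + d) * (a + c + e) *
          (a + d + e) * (b + c + d) * (b + c + e) * (b + d + e) * (c + d + e)) *
        (a + b + c + d + e) := by
  rw [mul_assoc, ← inf_univ_fin_five, ← prodSubsetSums_even_fin_five,
    ← prodSubsetSums_odd_fin_five]
  exact statement14_general Finset.univ ![a, b, c, d, e]
end

section
/- In the polynomial ring ℝ[x,y,z], let 𝔞 = ⟨x⟩, 𝔟 = ⟨y⟩, 𝔠 = ⟨z⟩. Then (𝔞 + 𝔟 + 𝔠) · (𝔞 ∩ 𝔟)(𝔞 ∩ 𝔠)(𝔟 ∩ 𝔠) = ⟨x,y,z⟩ · ⟨xyz⟩², and this ideal is strictly contained in 𝔞𝔟𝔠 · (𝔞 ∩ 𝔟 ∩ 𝔠) = ⟨xyz⟩²; in particular the equality (*)₃ fails in ℝ[x,y,z]. -/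
open MvPolynomial

/-!
If `q` is a nonzerodivisor modulo an ideal `I`, then `I ∩ ⟨q⟩ = I⟨q⟩`. Hence, when `x`, `y`, `z` are
pairwise nonzerodivisors modulo each other, every intersection of the ideals `⟨x⟩`, `⟨y⟩`, `⟨z⟩` is
a product, and the two sides become `⟨x, y, z⟩⟨xyz⟩²` and `⟨xyz⟩²`. Cancelling `(xyz)²` from an
equality of the two would give `1 ∈ ⟨x, y, z⟩`.
-/

section CommRing

open Ideal nonZeroDivisors

variable {R : Type*} [CommRing R]

theorem inf_span_singleton_eq_mul_of_isSMulRegular {I : Ideal R} {q : R}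
    (hq : IsSMulRegular (R ⧸ I) q) : I ⊓ span {q} = I * span {q} := by
  refine le_antisymm ?_ mul_le_inf
  rintro _ ⟨hI, hspan⟩
  obtain ⟨r, rfl⟩ := mem_span_singleton'.1 hspan
  have hr : r ∈ I :=
    mem_of_isSMulRegular_quotient_of_smul_mem hq (by rwa [smul_eq_mul, mul_comm])
  exact mul_mem_mul hr (mem_span_singleton_self q)

theorem isSMulRegular_quotient_inf {I J : Ideal R} {q : R} (hI : IsSMulRegular (R ⧸ I) q)
    (hJ : IsSMulRegular (R ⧸ J) q) : IsSMulRegular (R ⧸ (I ⊓ J)) q :=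
  (isSMulRegular_quotient_iff_mem_of_smul_mem _ _).2 fun _ hr =>
    ⟨mem_of_isSMulRegular_quotient_of_smul_mem hI hr.1,
      mem_of_isSMulRegular_quotient_of_smul_mem hJ hr.2⟩

theorem isSMulRegular_quotient_span_singleton_of_prime {p q : R} (hp : Prime p) (hpq : ¬p ∣ q) :
    IsSMulRegular (R ⧸ span {p}) q := by
  simp only [isSMulRegular_quotient_iff_mem_of_smul_mem, smul_eq_mul, mem_span_singleton]
  exact fun r hr => (hp.dvd_or_dvd hr).resolve_left hpq

theorem mul_span_singleton_lt_of_ne_top {I : Ideal R} {r : R} (hI : I ≠ ⊤) (hr : r ∈ R⁰) :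
    I * span {r} < span {r} := by
  refine lt_of_le_not_ge mul_le_right fun hle => (ne_top_iff_one I).1 hI ?_
  obtain ⟨s, hs, hsr⟩ := mem_mul_span_singleton.1 (hle (mem_span_singleton_self r))
  have hs_one : s = 1 := (mul_cancel_right_mem_nonZeroDivisors hr).1 (by rw [hsr, one_mul])
  exact hs_one ▸ hs

theorem statement17_general {x y z : R} (hxy : IsSMulRegular (R ⧸ span {x}) y)
    (hxz : IsSMulRegular (R ⧸ span {x}) z) (hyz : IsSMulRegular (R ⧸ span {y}) z)
    (hxyz : x * y * z ∈ R⁰) (hne_top : span {x, y, z} ≠ ⊤) :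
    let a : Ideal R := span {x}
    let b : Ideal R := span {y}
    let c : Ideal R := span {z}
    (a + b + c) * ((a ⊓ b) * (a ⊓ c) * (b ⊓ c)) = span {x, y, z} * span {x * y * z} ^ 2 ∧
      a * b * c * (a ⊓ b ⊓ c) = span {x * y * z} ^ 2 ∧
      (a + b + c) * ((a ⊓ b) * (a ⊓ c) * (b ⊓ c)) < a * b * c * (a ⊓ b ⊓ c) := by
  intro a b c
  have hab : a ⊓ b = a * b := inf_span_singleton_eq_mul_of_isSMulRegular hxy
  have hac : a ⊓ c = a * c := inf_span_singleton_eq_mul_of_isSMulRegular hxz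
  have hbc : b ⊓ c = b * c := inf_span_singleton_eq_mul_of_isSMulRegular hyz
  have habc : a ⊓ b ⊓ c = a * b * c := by
    rw [inf_span_singleton_eq_mul_of_isSMulRegular (isSMulRegular_quotient_inf hxz hyz), hab]
  have hprod : span {x * y * z} = a * b * c := by
    simp only [a, b, c, span_singleton_mul_span_singleton]
  have hsum : span {x, y, z} = a + b + c := by
    simp only [a, b, c, span_insert, Submodule.add_eq_sup, sup_assoc]
  have hleft : (a + b + c) * ((a ⊓ b) * (a ⊓ c) * (b ⊓ c))
      = span {x, y, z} * span {x * y * z} ^ 2 := by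
    rw [hab, hac, hbc, hprod, hsum]
    ring
  have hright : a * b * c * (a ⊓ b ⊓ c) = span {x * y * z} ^ 2 := by
    rw [habc, hprod, sq]
  refine ⟨hleft, hright, ?_⟩
  rw [hleft, hright, span_singleton_pow]
  exact mul_span_singleton_lt_of_ne_top hne_top (pow_mem hxyz 2)

end CommRing

section MvPolynomial

variable {σ R : Type*} [CommRing R]

theorem isSMulRegular_quotient_span_X_X [IsDomain R] {i j : σ} (hij : i ≠ j) :
    IsSMulRegular (MvPolynomial σ R ⧸ Ideal.span {(X i : MvPolynomial σ R)})
      (X j : MvPolynomial σ R) :=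
  isSMulRegular_quotient_span_singleton_of_prime X_prime fun h => hij (X_dvd_X.1 h)

theorem idealOfVars_ne_top [Nontrivial R] : idealOfVars σ R ≠ ⊤ := by
  rw [Ideal.ne_top_iff_one, ← C_1, ← pow_one (idealOfVars σ R), C_mem_pow_idealOfVars_iff]
  simp

end MvPolynomial

theorem statement17 :
    let x : MvPolynomial (Fin 3) ℝ := X 0
    let y : MvPolynomial (Fin 3) ℝ := X 1
    let z : MvPolynomial (Fin 3) ℝ := X 2
    let a : Ideal (MvPolynomial (Fin 3) ℝ) := Ideal.span {x}
    let b : Ideal (MvPolynomial (Fin 3) ℝ) := Ideal.span {y}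
    let c : Ideal (MvPolynomial (Fin 3) ℝ) := Ideal.span {z}
    (a + b + c) * ((a ⊓ b) * (a ⊓ c) * (b ⊓ c))
        = Ideal.span {x, y, z} * Ideal.span {x * y * z} ^ 2 ∧
      a * b * c * (a ⊓ b ⊓ c) = Ideal.span {x * y * z} ^ 2 ∧
      (a + b + c) * ((a ⊓ b) * (a ⊓ c) * (b ⊓ c)) < a * b * c * (a ⊓ b ⊓ c) := by
  have hne_top : Ideal.span {X 0, X 1, X 2} ≠ (⊤ : Ideal (MvPolynomial (Fin 3) ℝ)) :=
    ne_top_of_le_ne_top idealOfVars_ne_top (Ideal.span_mono (by simp [Set.insert_subset_iff]))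
  exact statement17_general (isSMulRegular_quotient_span_X_X (by decide))
    (isSMulRegular_quotient_span_X_X (by decide)) (isSMulRegular_quotient_span_X_X (by decide))
    (mem_nonZeroDivisors_of_ne_zero (by simp)) hne_top
end
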